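/- Let μ be a (K,d)-doubling Borel measure on a metric space (M,ρ) endowed with a Christ dyadic cube system with parameter δ ∈ (0,1) and with the level-j₀ subcube families. Let s ∈ ℝ, p ∈ (0,∞) and q ∈ (0,∞]. Then there exists a constant C ≥ 1 such that for every family a = {a_t^{j,ν}}_{j∈ℤ₊, t∈I_j, 1≤ν≤N_t^j} of complex numbers: C^{−1}·‖a‖_{f^{s,1/q}_{q,q}} ≤ ‖a‖_{f^{s,1/p}_{p,q}} ≤ C·‖a‖_{f^{s,1/q}_{q,q}}, and likewise C^{−1}·‖a‖_{f̃^{s,1/q}_{q,q}} ≤ ‖a‖_{f̃^{s,1/p}_{p,q}} ≤ C·‖a‖_{f̃^{s,1/q}_{q,q}}. That is, f^{s,1/q}_{q,q} = f^{s,1/p}_{p,q} and f̃^{s,1/q}_{q,q} = f̃^{s,1/p}_{p,q} with equivalent quasi-norms. -/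

import Mathlib

open MeasureTheory Metric
open scoped ENNReal

/-- A Christ dyadic cube system on a metric measure space `(M, ρ, μ)`. -/
structure ChristSystem (M : Type*) [MetricSpace M] [MeasurableSpace M] (μ : Measure M) where
  δ : ℝ
  δ_pos : 0 < δ
  δ_lt_one : δ < 1
  cSmall : ℝ
  cBig : ℝ
  cSmall_pos : 0 < cSmall
  cSmall_lt_cBig : cSmall < cBig
  I : ℤ → Type
  countable_I : ∀ j : ℤ, Countable (I j)
  Q : (j : ℤ) → I j → Set M
  center : (j : ℤ) → I j → M
  isOpen_Q : ∀ (j : ℤ) (α : I j), IsOpen (Q j α)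
  cover : ∀ j : ℤ, μ (Set.univ \ ⋃ α : I j, Q j α) = 0
  disjoint_Q : ∀ (j : ℤ) (α β : I j), α ≠ β → Q j α ∩ Q j β = ∅
  nested : ∀ (j ℓ : ℤ), j ≤ ℓ → ∀ (α : I j) (β : I ℓ), Q ℓ β ⊆ Q j α ∨ Q ℓ β ∩ Q j α = ∅
  parent : ∀ (j : ℤ) (α : I j) (ℓ : ℤ), ℓ < j → ∃! β : I ℓ, Q j α ⊆ Q ℓ β
  diam_le : ∀ (j : ℤ) (α : I j), EMetric.diam (Q j α) ≤ ENNReal.ofReal (cBig * δ ^ j)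
  ball_subset : ∀ (j : ℤ) (α : I j), ball (center j α) (cSmall * δ ^ j) ⊆ Q j α

/-- The `ℓ^q` norm (with `q ∈ (0,∞]`, usual modification when `q = ∞`) of a
sequence of extended nonnegative reals. -/
noncomputable def seqLq (q : ℝ≥0∞) (a : ℕ → ℝ≥0∞) : ℝ≥0∞ :=
  if q = ⊤ then ⨆ j, a j else (∑' j, a j ^ q.toReal) ^ (1 / q.toReal)

/-- The `L^p` quantity `(∫_A g^p dμ)^{1/p}` (ess sup over `A` when `p = ∞`) for a
nonnegative function `g`. -/
noncomputable def lpOn {M : Type*} [MetricSpace M] [MeasurableSpace M]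
    (μ : Measure M) (p : ℝ≥0∞) (A : Set M) (g : M → ℝ≥0∞) : ℝ≥0∞ :=
  if p = ⊤ then essSup g (μ.restrict A)
  else (∫⁻ x in A, g x ^ p.toReal ∂μ) ^ (1 / p.toReal)

/-- The `ℓ^q(L^p_τ)` norm of a sequence of nonnegative functions:
`sup_{k ∈ ℤ, α ∈ I_k} μ(Q_α^k)^{-τ} ( ∑_{j = max(k,0)}^∞ ( ∫_{Q_α^k} g_j^p dμ )^{q/p} )^{1/q}`. -/
noncomputable def bNorm {M : Type*} [MetricSpace M] [MeasurableSpace M] {μ : Measure M}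
    (S : ChristSystem M μ) (p q : ℝ≥0∞) (τ : ℝ) (g : ℕ → M → ℝ≥0∞) : ℝ≥0∞ :=
  ⨆ (k : ℤ) (α : S.I k), μ (S.Q k α) ^ (-τ) *
    seqLq q (fun j => if k.toNat ≤ j then lpOn μ p (S.Q k α) (g j) else 0)

/-- The `L^p_τ(ℓ^q)` norm of a sequence of nonnegative functions:
`sup_{k ∈ ℤ, α ∈ I_k} μ(Q_α^k)^{-τ} ( ∫_{Q_α^k} ( ∑_{j = max(k,0)}^∞ g_j^q )^{p/q} dμ )^{1/p}`. -/
noncomputable def fNorm {M : Type*} [MetricSpace M] [MeasurableSpace M] {μ : Measure M}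
    (S : ChristSystem M μ) (p q : ℝ≥0∞) (τ : ℝ) (g : ℕ → M → ℝ≥0∞) : ℝ≥0∞ :=
  ⨆ (k : ℤ) (α : S.I k), μ (S.Q k α) ^ (-τ) *
    lpOn μ p (S.Q k α) (fun x => seqLq q (fun j => if k.toNat ≤ j then g j x else 0))

/-- The index type of the level-`(j+j₀)` subcubes of the cube `Q_t^j`. -/
def SubIdx {M : Type*} [MetricSpace M] [MeasurableSpace M] {μ : Measure M}
    (S : ChristSystem M μ) (j₀ : ℕ) (j : ℕ) (t : S.I j) : Type :=
  {β : S.I ((j : ℤ) + j₀) // S.Q ((j : ℤ) + j₀) β ⊆ S.Q (j : ℤ) t}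

/-- The subcube `Q_t^{j,ν}`. -/
def SubQ {M : Type*} [MetricSpace M] [MeasurableSpace M] {μ : Measure M}
    (S : ChristSystem M μ) (j₀ : ℕ) (j : ℕ) (t : S.I j) (ν : SubIdx S j₀ j t) : Set M :=
  S.Q ((j : ℤ) + j₀) ν.1

/-- The level-`j` function `x ↦ ∑_{t ∈ I_j} ∑_{ν} w_t^{j,ν} |a_t^{j,ν}| χ_{E_t^{j,ν}}(x)`
associated with a coefficient family `a`, a weight family `w` and a family of sets `E`. -/
noncomputable def seqFunOn {M : Type*} [MetricSpace M] [MeasurableSpace M] {μ : Measure M}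
    (S : ChristSystem M μ) (j₀ : ℕ)
    (w : (j : ℕ) → (t : S.I j) → SubIdx S j₀ j t → ℝ≥0∞)
    (E : (j : ℕ) → (t : S.I j) → SubIdx S j₀ j t → Set M)
    (a : (j : ℕ) → (t : S.I j) → SubIdx S j₀ j t → ℂ) (j : ℕ) (x : M) : ℝ≥0∞ :=
  ∑' (t : S.I j) (ν : SubIdx S j₀ j t),
    w j t ν * (‖a j t ν‖₊ : ℝ≥0∞) * (E j t ν).indicator (fun _ => (1 : ℝ≥0∞)) x

/-- The level-`j` function `x ↦ ∑_{t ∈ I_j} ∑_{ν} w_t^{j,ν} |a_t^{j,ν}| χ_{Q_t^{j,ν}}(x)`. -/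
noncomputable def seqFun {M : Type*} [MetricSpace M] [MeasurableSpace M] {μ : Measure M}
    (S : ChristSystem M μ) (j₀ : ℕ)
    (w : (j : ℕ) → (t : S.I j) → SubIdx S j₀ j t → ℝ≥0∞)
    (a : (j : ℕ) → (t : S.I j) → SubIdx S j₀ j t → ℂ) (j : ℕ) (x : M) : ℝ≥0∞ :=
  seqFunOn S j₀ w (fun j t ν => SubQ S j₀ j t ν) a j x

/-- The weight `δ^{-js}` used for the sequence spaces `b^{s,τ}_{p,q}` and `f^{s,τ}_{p,q}`. -/
noncomputable def deltaWeight {M : Type*} [MetricSpace M] [MeasurableSpace M] {μ : Measure M}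
    (S : ChristSystem M μ) (j₀ : ℕ) (s : ℝ) :
    (j : ℕ) → (t : S.I j) → SubIdx S j₀ j t → ℝ≥0∞ :=
  fun j _ _ => ENNReal.ofReal (S.δ ^ (-(j : ℝ) * s))

/-- The weight `μ(Q_t^{j,ν})^{-s/d}` used for the sequence spaces `b̃^{s,τ}_{p,q}`
and `f̃^{s,τ}_{p,q}`. -/
noncomputable def tildeWeight {M : Type*} [MetricSpace M] [MeasurableSpace M] {μ : Measure M}
    (S : ChristSystem M μ) (j₀ : ℕ) (d s : ℝ) :
    (j : ℕ) → (t : S.I j) → SubIdx S j₀ j t → ℝ≥0∞ :=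
  fun j t ν => μ (SubQ S j₀ j t ν) ^ (-(s / d))

/-!
This is a John–Nirenberg argument. By Chebyshev's inequality, finiteness of the norm with exponent
`p₂` gives a level `λ`, comparable to that norm, which the tail `(∑_{j ≥ k} g_j^q)^{1/q}` exceeds
only on a small fraction of every cube of level `k`. Since `g_j` is constant on the cubes of level
`j + j₀`, doubling then forces `g_j ≤ λ` almost everywhere. Stop at the first partial sum of
`∑ g_j^q` exceeding `λ^q`: on a stopping cube the tail drops by at most `(1 + j₀) λ^q` when one
passes to the tail belonging to that cube, and the stopping cubes fill at most half of the original
one. Iterating, the tail exceeds `m (1 + j₀) λ^q` on at most the fraction `2⁻ᵐ` of each cube, so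
that its moments of all orders are bounded by powers of `λ`.
-/

section

open Filter
open scoped NNReal Topology

section Moments

variable {X : Type*} [MeasurableSpace X] {ν : Measure X} {f : X → ℝ≥0∞}

theorem lintegral_le_tsum_mul_measure_lt (hf : Measurable f) {t : ℕ → ℝ≥0∞} (ht : t 0 = 0)
    (hlim : Tendsto (fun m => ν {x | t m < f x}) atTop (𝓝 0)) :
    ∫⁻ x, f x ∂ν ≤ ∑' m, t (m + 1) * ν {x | t m < f x} := by
  have hmeas (m : ℕ) : MeasurableSet {x | t m < f x} := measurableSet_lt measurable_const hf
  have hbdd : ∀ᵐ x ∂ν, ∃ m, f x ≤ t m := by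
    rw [ae_iff, ← nonpos_iff_eq_zero]
    refine ge_of_tendsto' hlim fun m => measure_mono fun x hx => ?_
    exact not_le.1 fun hle => hx ⟨m, hle⟩
  have hpointwise : ∀ᵐ x ∂ν,
      f x ≤ ∑' m, {x | t m < f x}.indicator (fun _ => t (m + 1)) x := by
    filter_upwards [hbdd] with x hx
    classical
    rcases h : Nat.find hx with _ | m
    · have hle : f x ≤ t 0 := h ▸ Nat.find_spec hx
      exact (hle.trans_eq ht).trans zero_le
    · have hle : f x ≤ t (m + 1) := h ▸ Nat.find_spec hx
      have hlt : t m < f x := not_le.1 (Nat.find_min hx (h ▸ m.lt_succ_self))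
      refine le_trans ?_ (ENNReal.le_tsum m)
      rwa [Set.indicator_of_mem (show x ∈ {x | t m < f x} from hlt)]
  calc ∫⁻ x, f x ∂ν
      ≤ ∫⁻ x, ∑' m, {x | t m < f x}.indicator (fun _ => t (m + 1)) x ∂ν :=
        lintegral_mono_ae hpointwise
    _ = ∑' m, t (m + 1) * ν {x | t m < f x} := by
        rw [lintegral_tsum fun m => (measurable_const.indicator (hmeas m)).aemeasurable]
        simp only [lintegral_indicator_const (hmeas _)]

/-- The constant `∑ₘ (m + 1) ^ r 2⁻ᵐ`, which bounds the `r`-th moment of a function whose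
distribution function is dominated by `2⁻ᵐ` at each natural number `m`. -/
noncomputable def geomMoment (r : ℝ) : ℝ≥0∞ := ∑' m : ℕ, ((m + 1 : ℕ) : ℝ≥0∞) ^ r * 2⁻¹ ^ m

theorem geomMoment_ne_top (r : ℝ) : geomMoment r ≠ ⊤ := by
  have hgeom : Summable fun m : ℕ => (m : ℝ) ^ ⌈r⌉₊ * 2⁻¹ ^ m :=
    summable_pow_mul_geometric_of_norm_lt_one ⌈r⌉₊ (by norm_num)
  have hsum : Summable fun m : ℕ => 2 * (((m + 1 : ℕ) : ℝ) ^ ⌈r⌉₊ * 2⁻¹ ^ (m + 1)) :=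
    (hgeom.comp_injective (add_left_injective 1)).mul_left 2
  refine ne_top_of_le_ne_top hsum.tsum_ofReal_ne_top (ENNReal.tsum_le_tsum fun m => ?_)
  have hshift : 2 * (((m + 1 : ℕ) : ℝ) ^ ⌈r⌉₊ * 2⁻¹ ^ (m + 1)) =
      ((m + 1 : ℕ) : ℝ) ^ ⌈r⌉₊ * 2⁻¹ ^ m := by
    rw [pow_succ]
    ring
  rw [hshift, ENNReal.ofReal_mul (by positivity), ENNReal.ofReal_pow (by positivity),
    ENNReal.ofReal_pow (by positivity), ENNReal.ofReal_natCast,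
    ENNReal.ofReal_inv_of_pos two_pos, ENNReal.ofReal_ofNat, ← ENNReal.rpow_natCast _ ⌈r⌉₊]
  gcongr
  · exact_mod_cast m.succ_pos
  · exact Nat.le_ceil r

theorem lintegral_rpow_le_of_measure_mul_lt_le (hf : Measurable f) {r : ℝ} (hr : 0 < r)
    {c A : ℝ≥0∞} (hA : A ≠ ⊤) (hdecay : ∀ m : ℕ, ν {x | m * c < f x} ≤ 2⁻¹ ^ m * A) :
    ∫⁻ x, f x ^ r ∂ν ≤ geomMoment r * c ^ r * A := by
  have hset (m : ℕ) : {x | (m * c) ^ r < f x ^ r} = {x | m * c < f x} := by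
    simp only [ENNReal.rpow_lt_rpow_iff hr]
  have hlim : Tendsto (fun m : ℕ => ν {x | (m * c) ^ r < f x ^ r}) atTop (𝓝 0) := by
    have hgeom : Tendsto (fun m : ℕ => (2⁻¹ : ℝ≥0∞) ^ m * A) atTop (𝓝 (0 * A)) :=
      ENNReal.Tendsto.mul_const
        (ENNReal.tendsto_pow_atTop_nhds_zero_of_lt_one (by simp)) (.inr hA)
    rw [zero_mul] at hgeom
    exact tendsto_of_tendsto_of_tendsto_of_le_of_le tendsto_const_nhds hgeom
      (fun _ => zero_le) fun m => (congrArg ν (hset m)).trans_le (hdecay m)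
  calc ∫⁻ x, f x ^ r ∂ν
      ≤ ∑' m : ℕ, ((m + 1 : ℕ) * c) ^ r * ν {x | (m * c) ^ r < f x ^ r} :=
        lintegral_le_tsum_mul_measure_lt (hf.pow_const r) (t := fun m : ℕ => (m * c) ^ r)
          (by simp [hr]) hlim
    _ ≤ ∑' m : ℕ, ((m + 1 : ℕ) : ℝ≥0∞) ^ r * 2⁻¹ ^ m * (c ^ r * A) := by
        refine ENNReal.tsum_le_tsum fun m => ?_
        rw [hset, ENNReal.mul_rpow_of_nonneg _ _ hr.le]
        refine (mul_le_mul_right (hdecay m) _).trans_eq (by ring)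
    _ = geomMoment r * c ^ r * A := by rw [ENNReal.tsum_mul_right, geomMoment, mul_assoc]

theorem mul_measure_lt_le_of_eLpNorm_le (hf : Measurable f) {p : ℝ≥0∞} (hp : p ≠ 0)
    {N : ℝ≥0∞} (hN : eLpNorm f p ν ≤ N * ν Set.univ ^ p.toReal⁻¹) (A : ℝ≥0∞) :
    A * ν {x | A ^ p.toReal⁻¹ * N < f x} ≤ ν Set.univ := by
  rcases eq_or_ne N 0 with rfl | hN0
  · have hzero : f =ᵐ[ν] 0 :=
      (eLpNorm_eq_zero_iff hf.aestronglyMeasurable hp).1 (by simpa using hN)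
    have hnull : ν {x | A ^ p.toReal⁻¹ * 0 < f x} = 0 := by
      simpa [ae_iff, pos_iff_ne_zero] using! hzero
    rw [hnull, mul_zero]
    exact zero_le
  rcases eq_or_ne A 0 with rfl | hA0
  · simp
  rcases eq_or_ne N ⊤ with rfl | hNt
  · have hA_pow : A ^ p.toReal⁻¹ ≠ 0 := by simp [ENNReal.rpow_eq_zero_iff, hA0]
    simp [ENNReal.mul_top hA_pow]
  rcases eq_or_ne p ⊤ with rfl | hpt
  · have hbdd : ∀ᵐ x ∂ν, f x ≤ N := by
      filter_upwards [enorm_ae_le_eLpNormEssSup f ν] with x hx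
      simpa using hx.trans hN
    have hnull : ν {x | N < f x} = 0 := by simpa [ae_iff] using hbdd
    simp [hnull]
  have hp_pos := ENNReal.toReal_pos hp hpt
  have hN_pow : N ^ p.toReal ≠ 0 := by simp [ENNReal.rpow_eq_zero_iff, hN0, hNt]
  have hN_pow_top : N ^ p.toReal ≠ ⊤ := ENNReal.rpow_ne_top_of_nonneg hp_pos.le hNt
  refine (ENNReal.mul_le_mul_iff_right hN_pow hN_pow_top).1 ?_
  calc N ^ p.toReal * (A * ν {x | A ^ p.toReal⁻¹ * N < f x})
      = (A ^ p.toReal⁻¹ * N) ^ p.toReal * ν {x | A ^ p.toReal⁻¹ * N < f x} := by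
        rw [ENNReal.mul_rpow_of_nonneg _ _ hp_pos.le, ENNReal.rpow_inv_rpow hp_pos.ne']
        ring
    _ ≤ (A ^ p.toReal⁻¹ * N) ^ p.toReal * ν {x | A ^ p.toReal⁻¹ * N ≤ ‖f x‖ₑ} := by
        gcongr with x
        exact fun hx => hx.le
    _ ≤ eLpNorm f p ν ^ p.toReal :=
        mul_meas_ge_le_pow_eLpNorm' ν hp hpt hf.aestronglyMeasurable _
    _ ≤ (N * ν Set.univ ^ p.toReal⁻¹) ^ p.toReal := by gcongr
    _ = N ^ p.toReal * ν Set.univ := by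
        rw [ENNReal.mul_rpow_of_nonneg _ _ hp_pos.le, ENNReal.rpow_inv_rpow hp_pos.ne']

end Moments

section TailSums

variable {X : Type*} {h : ℕ → X → ℝ≥0∞} {x : X}

/-- The tail `∑_{j ≥ n} h_j` of a series of functions. -/
noncomputable def tailSum (h : ℕ → X → ℝ≥0∞) (n : ℕ) (x : X) : ℝ≥0∞ :=
  ∑' j, if n ≤ j then h j x else 0

/-- The `ℓ^q` norm of the tail `(g_j)_{j ≥ n}`, the integrand of `fNorm` on a cube of
level `k` with `n = max(k, 0)`. -/
noncomputable def tailLq (q : ℝ≥0∞) (g : ℕ → X → ℝ≥0∞) (n : ℕ) (x : X) : ℝ≥0∞ :=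
  seqLq q fun j => if n ≤ j then g j x else 0

theorem tailSum_eq_iSup (h : ℕ → X → ℝ≥0∞) (n : ℕ) (x : X) :
    tailSum h n x = ⨆ J, ∑ j ∈ Finset.Ico n J, h j x := by
  have hfilter (J : ℕ) : {j ∈ Finset.range J | n ≤ j} = Finset.Ico n J := by
    ext j
    simp only [Finset.mem_filter, Finset.mem_range, Finset.mem_Ico, and_comm]
  simp only [tailSum, ENNReal.tsum_eq_iSup_nat, ← Finset.sum_filter, hfilter]

theorem lt_tailSum_iff {lam : ℝ≥0∞} {n : ℕ} :
    lam < tailSum h n x ↔ ∃ J, lam < ∑ j ∈ Finset.Ico n J, h j x := by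
  rw [tailSum_eq_iSup, lt_iSup_iff]

theorem sum_Ico_le_tailSum (h : ℕ → X → ℝ≥0∞) (n J : ℕ) (x : X) :
    ∑ j ∈ Finset.Ico n J, h j x ≤ tailSum h n x :=
  (tailSum_eq_iSup h n x).symm ▸ le_iSup (fun J => ∑ j ∈ Finset.Ico n J, h j x) J

theorem tailSum_le_sum_Ico_add (h : ℕ → X → ℝ≥0∞) (n m : ℕ) (x : X) :
    tailSum h n x ≤ ∑ j ∈ Finset.Ico n m, h j x + tailSum h m x := by
  rw [tailSum_eq_iSup h n]
  refine iSup_le fun J => ?_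
  calc ∑ j ∈ Finset.Ico n J, h j x
      ≤ ∑ j ∈ Finset.Ico n m ∪ Finset.Ico m J, h j x :=
        Finset.sum_le_sum_of_subset Finset.Ico_subset_Ico_union_Ico
    _ ≤ ∑ j ∈ Finset.Ico n m, h j x + ∑ j ∈ Finset.Ico m J, h j x :=
        le_self_add.trans_eq (Finset.sum_union_inter)
    _ ≤ _ := by gcongr; exact sum_Ico_le_tailSum h m J x

theorem le_seqLq {q : ℝ≥0∞} (hq : q ≠ 0) (a : ℕ → ℝ≥0∞) (j : ℕ) : a j ≤ seqLq q a := by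
  unfold seqLq
  split_ifs with hqt
  · exact le_iSup a j
  · rw [one_div, ENNReal.le_rpow_inv_iff (ENNReal.toReal_pos hq hqt)]
    exact ENNReal.le_tsum (f := fun j => a j ^ q.toReal) j

theorem le_tailLq {q : ℝ≥0∞} (hq : q ≠ 0) (g : ℕ → X → ℝ≥0∞) (j : ℕ) (x : X) :
    g j x ≤ tailLq q g j x := by
  simpa only [tailLq, le_refl, if_true] using le_seqLq hq (fun i => if j ≤ i then g i x else 0) j

theorem tailLq_eq_tailSum_rpow {q : ℝ≥0∞} (hq : q ≠ 0) (hqt : q ≠ ⊤) (g : ℕ → X → ℝ≥0∞) (n : ℕ)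
    (x : X) : tailLq q g n x = tailSum (fun j x => g j x ^ q.toReal) n x ^ q.toReal⁻¹ := by
  simp only [tailLq, seqLq, if_neg hqt, tailSum, one_div, apply_ite (· ^ q.toReal),
    ENNReal.zero_rpow_of_pos (ENNReal.toReal_pos hq hqt)]

theorem lt_tailLq_iff {q : ℝ≥0∞} (hq : q ≠ 0) (hqt : q ≠ ⊤) {g : ℕ → X → ℝ≥0∞} {n : ℕ}
    {lam : ℝ≥0∞} :
    lam < tailLq q g n x ↔ lam ^ q.toReal < tailSum (fun j x => g j x ^ q.toReal) n x := by
  rw [tailLq_eq_tailSum_rpow hq hqt, ENNReal.lt_rpow_inv_iff (ENNReal.toReal_pos hq hqt)]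

theorem eLpNorm_tailLq [MeasurableSpace X] {ν : Measure X} {p q : ℝ≥0∞} (hp : p ≠ 0) (hpt : p ≠ ⊤)
    (hq : q ≠ 0) (hqt : q ≠ ⊤) (g : ℕ → X → ℝ≥0∞) (n : ℕ) :
    eLpNorm (tailLq q g n) p ν =
      (∫⁻ x, tailSum (fun j x => g j x ^ q.toReal) n x ^ (p.toReal / q.toReal) ∂ν) ^
        p.toReal⁻¹ := by
  simp only [eLpNorm_eq_lintegral_rpow_enorm_toReal hp hpt, enorm_eq_self, one_div,
    tailLq_eq_tailSum_rpow hq hqt, ← ENNReal.rpow_mul, inv_mul_eq_div]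

theorem measurable_tailSum [MeasurableSpace X] (hh : ∀ j, Measurable (h j)) (n : ℕ) :
    Measurable (tailSum h n) := by
  refine Measurable.tsum fun j => ?_
  split_ifs
  exacts [hh j, measurable_const]

theorem measurable_tailLq [MeasurableSpace X] (q : ℝ≥0∞) {g : ℕ → X → ℝ≥0∞}
    (hg : ∀ j, Measurable (g j)) (n : ℕ) : Measurable (tailLq q g n) := by
  have hterm (j : ℕ) : Measurable fun x => if n ≤ j then g j x else 0 := by
    split_ifs
    exacts [hg j, measurable_const]
  unfold tailLq seqLq
  split_ifs
  · exact Measurable.iSup hterm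
  · exact (Measurable.tsum fun j => (hterm j).pow_const _).pow_const _

end TailSums

variable {M : Type*} [MetricSpace M] [MeasurableSpace M] {μ : Measure M}

theorem measure_ball_two_pow_mul_le {A : ℝ≥0∞}
    (hdoub : ∀ (x : M) (r : ℝ), 0 < r → μ (ball x (2 * r)) ≤ A * μ (ball x r))
    (x : M) {r : ℝ} (hr : 0 < r) (n : ℕ) : μ (ball x (2 ^ n * r)) ≤ A ^ n * μ (ball x r) := by
  induction n with
  | zero => simp
  | succ n ih =>
    calc μ (ball x (2 ^ (n + 1) * r)) = μ (ball x (2 * (2 ^ n * r))) := by ring_nf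
      _ ≤ A * μ (ball x (2 ^ n * r)) := hdoub x _ (by positivity)
      _ ≤ A * (A ^ n * μ (ball x r)) := by gcongr
      _ = A ^ (n + 1) * μ (ball x r) := by ring

namespace ChristSystem

variable {S : ChristSystem M μ} {j₀ : ℕ}

instance (S : ChristSystem M μ) (k : ℤ) : Countable (S.I k) := S.countable_I k

theorem cBig_pos (S : ChristSystem M μ) : 0 < S.cBig := S.cSmall_pos.trans S.cSmall_lt_cBig

theorem measurableSet_Q [BorelSpace M] (S : ChristSystem M μ) (k : ℤ) (α : S.I k) :
    MeasurableSet (S.Q k α) := (S.isOpen_Q k α).measurableSet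

theorem center_mem_Q (S : ChristSystem M μ) (k : ℤ) (α : S.I k) : S.center k α ∈ S.Q k α :=
  S.ball_subset k α (mem_ball_self (mul_pos S.cSmall_pos (zpow_pos S.δ_pos k)))

theorem Q_subset_ball {k : ℤ} {α : S.I k} {x : M} (hx : x ∈ S.Q k α) :
    S.Q k α ⊆ ball x (2 * S.cBig * S.δ ^ k) := by
  intro y hy
  have hpos : 0 < S.cBig * S.δ ^ k := mul_pos S.cBig_pos (zpow_pos S.δ_pos k)
  have hdist : edist y x ≤ ENNReal.ofReal (S.cBig * S.δ ^ k) :=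
    (Metric.edist_le_ediam_of_mem hy hx).trans (S.diam_le k α)
  rw [edist_le_ofReal hpos.le] at hdist
  rw [mem_ball]
  linarith

theorem eq_of_mem_Q {k : ℤ} {α β : S.I k} {x : M} (hα : x ∈ S.Q k α) (hβ : x ∈ S.Q k β) :
    α = β := by
  by_contra hne
  exact Set.eq_empty_iff_forall_notMem.1 (S.disjoint_Q k α β hne) x ⟨hα, hβ⟩

theorem Q_subset_of_mem {k l : ℤ} (hkl : k ≤ l) {α : S.I k} {β : S.I l} {x : M}
    (hα : x ∈ S.Q k α) (hβ : x ∈ S.Q l β) : S.Q l β ⊆ S.Q k α :=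
  (S.nested k l hkl α β).resolve_right (Set.Nonempty.ne_empty ⟨x, hβ, hα⟩)

theorem exists_Q_subset {k l : ℤ} (hkl : k ≤ l) (β : S.I l) : ∃ α : S.I k, S.Q l β ⊆ S.Q k α := by
  rcases hkl.lt_or_eq with hlt | rfl
  · exact (S.parent l β k hlt).exists
  · exact ⟨β, subset_rfl⟩

theorem ae_forall_exists_mem_Q (S : ChristSystem M μ) :
    ∀ᵐ x ∂μ, ∀ k : ℤ, ∃ α : S.I k, x ∈ S.Q k α := by
  refine ae_all_iff.2 fun k => ?_
  simpa only [ae_iff, ← Set.mem_iUnion, ← Set.compl_ofPred, Set.compl_eq_univ_sdiff,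
    Set.ofPred_mem_eq] using S.cover k

/-- The dyadic form of the doubling property that the argument uses: every cube has positive finite
measure, which is at most `D` times the measure of each of its descendants `j₀` levels below. -/
structure IsDoubling (S : ChristSystem M μ) (j₀ : ℕ) (D : ℝ≥0) : Prop where
  measure_pos : ∀ (k : ℤ) (α : S.I k), 0 < μ (S.Q k α)
  measure_lt_top : ∀ (k : ℤ) (α : S.I k), μ (S.Q k α) < ⊤
  measure_le : ∀ (k : ℤ) (α : S.I k) (β : S.I (k + j₀)), S.Q _ β ⊆ S.Q k α →
    μ (S.Q k α) ≤ D * μ (S.Q _ β)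

theorem exists_isDoubling {A : ℝ≥0}
    (hball : ∀ (x : M) (r : ℝ), 0 < r → 0 < μ (ball x r) ∧ μ (ball x r) < ⊤)
    (hdoub : ∀ (x : M) (r : ℝ), 0 < r → μ (ball x (2 * r)) ≤ A * μ (ball x r))
    (S : ChristSystem M μ) (j₀ : ℕ) : ∃ D : ℝ≥0, S.IsDoubling j₀ D := by
  have hδ := S.δ_pos
  have hsmall := S.cSmall_pos
  have hbig := S.cBig_pos
  obtain ⟨n, hn⟩ := pow_unbounded_of_one_lt (2 * S.cBig / (S.cSmall * S.δ ^ j₀)) one_lt_two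
  rw [div_lt_iff₀ (by positivity)] at hn
  refine ⟨A ^ n, fun k α => ?_, fun k α => ?_, fun k α β hβα => ?_⟩
  · exact (hball _ _ (by positivity)).1.trans_le (measure_mono (S.ball_subset k α))
  · exact (measure_mono (Q_subset_ball (S.center_mem_Q k α))).trans_lt
      (hball _ _ (by positivity)).2
  · have hradius : 2 * S.cBig * S.δ ^ k ≤ 2 ^ n * (S.cSmall * S.δ ^ (k + j₀ : ℤ)) := by
      rw [zpow_add₀ hδ.ne', zpow_natCast]
      calc 2 * S.cBig * S.δ ^ k ≤ 2 ^ n * (S.cSmall * S.δ ^ j₀) * S.δ ^ k := by gcongr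
        _ = 2 ^ n * (S.cSmall * (S.δ ^ k * S.δ ^ j₀)) := by ring
    calc μ (S.Q k α)
        ≤ μ (ball (S.center _ β) (2 ^ n * (S.cSmall * S.δ ^ (k + j₀ : ℤ)))) :=
          measure_mono ((Q_subset_ball (hβα (S.center_mem_Q _ β))).trans (ball_subset_ball hradius))
      _ ≤ A ^ n * μ (ball (S.center _ β) (S.cSmall * S.δ ^ (k + j₀ : ℤ))) :=
          measure_ball_two_pow_mul_le hdoub _ (by positivity) n
      _ ≤ ((A ^ n : ℝ≥0) : ℝ≥0∞) * μ (S.Q _ β) := by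
          rw [ENNReal.coe_pow]
          gcongr
          exact S.ball_subset _ β

/-- A sequence of measurable functions whose `j`-th term is constant on each cube of level `j + j₀`,
as the level functions `seqFun` are. -/
structure IsCubewise (S : ChristSystem M μ) (j₀ : ℕ) (g : ℕ → M → ℝ≥0∞) : Prop where
  measurable : ∀ j, Measurable (g j)
  eq_of_mem : ∀ (j : ℕ) (β : S.I (j + j₀)) ⦃x y : M⦄, x ∈ S.Q _ β → y ∈ S.Q _ β → g j x = g j y

theorem IsCubewise.rpow {g : ℕ → M → ℝ≥0∞} (hg : S.IsCubewise j₀ g) (r : ℝ) :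
    S.IsCubewise j₀ fun j x => g j x ^ r where
  measurable j := (hg.measurable j).pow_const r
  eq_of_mem j β _ _ hx hy := by rw [hg.eq_of_mem j β hx hy]

theorem IsCubewise.sum_eq_of_mem {g : ℕ → M → ℝ≥0∞} (hg : S.IsCubewise j₀ g) {s : Finset ℕ} {J : ℕ}
    (hs : ∀ j ∈ s, j ≤ J) {β : S.I (J + j₀)} {x y : M} (hx : x ∈ S.Q _ β) (hy : y ∈ S.Q _ β) :
    ∑ j ∈ s, g j x = ∑ j ∈ s, g j y := by
  refine Finset.sum_congr rfl fun j hj => ?_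
  have hjJ : (j : ℤ) + j₀ ≤ J + j₀ := by exact_mod_cast Nat.add_le_add_right (hs j hj) j₀
  obtain ⟨α, hα⟩ := exists_Q_subset hjJ β
  exact hg.eq_of_mem j α (hα hx) (hα hy)

theorem isCubewise_seqFun [BorelSpace M] (S : ChristSystem M μ) (j₀ : ℕ)
    (w : (j : ℕ) → (t : S.I j) → SubIdx S j₀ j t → ℝ≥0∞)
    (a : (j : ℕ) → (t : S.I j) → SubIdx S j₀ j t → ℂ) : S.IsCubewise j₀ (seqFun S j₀ w a) where
  measurable j := by
    refine Measurable.tsum fun t => ?_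
    have : Countable (SubIdx S j₀ j t) := Subtype.countable
    exact Measurable.tsum fun ν =>
      (measurable_const.indicator (S.measurableSet_Q _ ν.1)).const_mul _
  eq_of_mem j β x y hx hy := by
    classical
    have hmem_iff (t : S.I j) (ν : SubIdx S j₀ j t) :
        x ∈ SubQ S j₀ j t ν ↔ y ∈ SubQ S j₀ j t ν := by
      constructor
      · intro hx'
        exact (eq_of_mem_Q hx hx' ▸ hy :)
      · intro hy'
        exact (eq_of_mem_Q hy hy' ▸ hx :)
    simp only [seqFun, seqFunOn, Set.indicator_apply, hmem_iff]

variable {D : ℝ≥0} {lam : ℝ≥0∞}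

theorem IsCubewise.ae_le_of_mul_measure_le (hD : S.IsDoubling j₀ D) {g : ℕ → M → ℝ≥0∞}
    (hg : S.IsCubewise j₀ g) {q : ℝ≥0∞} (hq : q ≠ 0)
    (hweak : ∀ (k : ℤ) (α : S.I k),
      (D + 2) * μ (S.Q k α ∩ {x | lam < tailLq q g k.toNat x}) ≤ μ (S.Q k α)) :
    ∀ᵐ x ∂μ, ∀ j, g j x ≤ lam := by
  filter_upwards [S.ae_forall_exists_mem_Q] with x hx j
  by_contra! hlt
  obtain ⟨β, hxβ⟩ := hx (j + j₀)
  obtain ⟨α, hβα⟩ := exists_Q_subset (by simp : (j : ℤ) ≤ j + j₀) β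
  -- By doubling, the whole cube `S.Q _ β` is too large a part of `S.Q j α` for `hweak`.
  have hsub : S.Q _ β ⊆ S.Q j α ∩ {y | lam < tailLq q g (j : ℤ).toNat y} := fun y hy =>
    ⟨hβα hy, hlt.trans_le ((hg.eq_of_mem j β hxβ hy).trans_le (le_tailLq hq g j y))⟩
  have hle : D * μ (S.Q _ β) + 2 * μ (S.Q _ β) ≤ D * μ (S.Q _ β) :=
    calc D * μ (S.Q _ β) + 2 * μ (S.Q _ β) = (D + 2) * μ (S.Q _ β) := by rw [add_mul]
      _ ≤ (D + 2) * μ (S.Q j α ∩ {y | lam < tailLq q g (j : ℤ).toNat y}) := by gcongr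
      _ ≤ μ (S.Q j α) := hweak j α
      _ ≤ D * μ (S.Q _ β) := hD.measure_le j α β hβα
  exact (ENNReal.lt_add_right (ENNReal.mul_ne_top ENNReal.coe_ne_top (hD.measure_lt_top _ β).ne)
    (mul_ne_zero two_ne_zero (hD.measure_pos _ β).ne')).not_ge hle

/-- The cubes `Q_β^{J+j₀} ⊆ Q_α^k` on which the partial sums of `∑_{j ≥ max(k,0)} h_j`
exceed `lam` for the first time at the index `J`. They are recorded as pairs `⟨J, β⟩`. -/
def stoppingCubes (S : ChristSystem M μ) (j₀ : ℕ) (h : ℕ → M → ℝ≥0∞) (lam : ℝ≥0∞) (k : ℤ)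
    (α : S.I k) : Set (Σ J : ℕ, S.I (J + j₀)) :=
  {i | S.Q _ i.2 ⊆ S.Q k α ∧ ∀ x ∈ S.Q _ i.2,
    ∑ j ∈ Finset.Ico k.toNat i.1, h j x ≤ lam ∧ lam < ∑ j ∈ Finset.Ico k.toNat (i.1 + 1), h j x}

section Stopping

variable {h : ℕ → M → ℝ≥0∞} {k : ℤ} {α : S.I k}

theorem pairwiseDisjoint_stoppingCubes :
    (S.stoppingCubes j₀ h lam k α).PairwiseDisjoint fun i => S.Q _ i.2 := by
  have index_le {i i' : Σ J : ℕ, S.I (J + j₀)} (hi : i ∈ S.stoppingCubes j₀ h lam k α)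
      (hi' : i' ∈ S.stoppingCubes j₀ h lam k α) {x : M} (hx : x ∈ S.Q _ i.2)
      (hx' : x ∈ S.Q _ i'.2) : i'.1 ≤ i.1 := by
    by_contra! hlt
    refine ((hi.2 x hx).2.trans_le ((Finset.sum_le_sum_of_subset ?_).trans (hi'.2 x hx').1)).false
    exact Finset.Ico_subset_Ico_right hlt
  rintro ⟨J, β⟩ hi ⟨J', β'⟩ hi' hne
  refine Set.disjoint_left.2 fun x hx hx' => hne ?_
  obtain rfl : J = J' := le_antisymm (index_le hi' hi hx' hx) (index_le hi hi' hx hx')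
  rw [show β = β' from eq_of_mem_Q hx hx']

theorem iUnion_stoppingCubes_subset :
    ⋃ i ∈ S.stoppingCubes j₀ h lam k α, S.Q _ i.2 ⊆
      S.Q k α ∩ {x | lam < tailSum h k.toNat x} :=
  Set.iUnion₂_subset fun _ hi x hx => ⟨hi.1 hx, lt_tailSum_iff.2 ⟨_, (hi.2 x hx).2⟩⟩

theorem IsCubewise.ae_exists_mem_stoppingCubes (hh : S.IsCubewise j₀ h) :
    ∀ᵐ x ∂μ, x ∈ S.Q k α → lam < tailSum h k.toNat x →
      ∃ i ∈ S.stoppingCubes j₀ h lam k α, x ∈ S.Q _ i.2 := by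
  filter_upwards [S.ae_forall_exists_mem_Q] with x hx hxα hlt
  classical
  have hex := lt_tailSum_iff.1 hlt
  rcases hfind : Nat.find hex with _ | J
  · simpa [hfind] using Nat.find_spec hex
  have habove : lam < ∑ j ∈ Finset.Ico k.toNat (J + 1), h j x := hfind ▸ Nat.find_spec hex
  have hbelow : ∑ j ∈ Finset.Ico k.toNat J, h j x ≤ lam :=
    not_lt.1 (Nat.find_min hex (hfind ▸ J.lt_succ_self))
  have hkJ : k.toNat ≤ J := by
    by_contra! hJk
    simp [Finset.Ico_eq_empty_of_le (Nat.succ_le_of_lt hJk)] at habove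
  have hkJ' : k ≤ J + j₀ := by omega
  obtain ⟨β, hxβ⟩ := hx (J + j₀)
  refine ⟨⟨J, β⟩, ⟨Q_subset_of_mem hkJ' hxα hxβ, fun y hy => ⟨?_, ?_⟩⟩, hxβ⟩
  · rwa [hh.sum_eq_of_mem (fun j hj => (Finset.mem_Ico.1 hj).2.le) hy hxβ]
  · rwa [hh.sum_eq_of_mem (fun j hj => Nat.lt_succ_iff.1 (Finset.mem_Ico.1 hj).2) hy hxβ]

theorem ae_tailSum_le_of_mem_stoppingCubes {b : ℝ≥0∞} (hb : ∀ᵐ x ∂μ, ∀ j, h j x ≤ b) :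
    ∀ᵐ x ∂μ, ∀ i ∈ S.stoppingCubes j₀ h lam k α, x ∈ S.Q _ i.2 →
      tailSum h k.toNat x ≤ lam + j₀ * b + tailSum h (i.1 + j₀) x := by
  filter_upwards [hb] with x hx i hi hxi
  calc tailSum h k.toNat x
      ≤ ∑ j ∈ Finset.Ico k.toNat i.1, h j x + tailSum h i.1 x := tailSum_le_sum_Ico_add ..
    _ ≤ lam + (∑ j ∈ Finset.Ico i.1 (i.1 + j₀), h j x + tailSum h (i.1 + j₀) x) :=
        add_le_add (hi.2 x hxi).1 (tailSum_le_sum_Ico_add ..)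
    _ ≤ lam + (j₀ * b + tailSum h (i.1 + j₀) x) := by
        gcongr
        simpa using Finset.sum_le_card_nsmul (Finset.Ico i.1 (i.1 + j₀)) (h · x) b fun j _ => hx j
    _ = lam + j₀ * b + tailSum h (i.1 + j₀) x := (add_assoc ..).symm

theorem IsCubewise.measure_add_lt_tailSum_le [BorelSpace M] (hh : S.IsCubewise j₀ h) {b : ℝ≥0∞}
    (hb : ∀ᵐ x ∂μ, ∀ j, h j x ≤ b) {t θ : ℝ≥0∞}
    (ht : ∀ (l : ℤ) (β : S.I l),
      μ (S.Q l β ∩ {x | t < tailSum h l.toNat x}) ≤ θ * μ (S.Q l β)) :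
    μ (S.Q k α ∩ {x | lam + j₀ * b + t < tailSum h k.toNat x}) ≤
      θ * μ (S.Q k α ∩ {x | lam < tailSum h k.toNat x}) := by
  have hcover : (S.Q k α ∩ {x | lam + j₀ * b + t < tailSum h k.toNat x} : Set M) ≤ᵐ[μ]
      ⋃ i ∈ S.stoppingCubes j₀ h lam k α,
        S.Q _ i.2 ∩ {x | t < tailSum h (i.1 + j₀ : ℤ).toNat x} := by
    filter_upwards [hh.ae_exists_mem_stoppingCubes (k := k) (α := α) (lam := lam),
      ae_tailSum_le_of_mem_stoppingCubes (j₀ := j₀) (k := k) (α := α) (lam := lam) hb]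
      with x hexists hle hx
    obtain ⟨i, hi, hxi⟩ := hexists hx.1 ((le_self_add.trans le_self_add).trans_lt hx.2)
    have hlt := lt_of_add_lt_add_left (hx.2.trans_le (hle i hi hxi))
    exact Set.mem_iUnion₂.2 ⟨i, hi, hxi, hlt⟩
  have hcount := (S.stoppingCubes j₀ h lam k α).to_countable
  calc μ (S.Q k α ∩ {x | lam + j₀ * b + t < tailSum h k.toNat x})
      ≤ μ (⋃ i ∈ S.stoppingCubes j₀ h lam k α,
          S.Q _ i.2 ∩ {x | t < tailSum h (i.1 + j₀ : ℤ).toNat x}) := measure_mono_ae hcover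
    _ ≤ ∑' i : S.stoppingCubes j₀ h lam k α,
          μ (S.Q _ i.1.2 ∩ {x | t < tailSum h (i.1.1 + j₀ : ℤ).toNat x}) :=
        measure_biUnion_le μ hcount _
    _ ≤ ∑' i : S.stoppingCubes j₀ h lam k α, θ * μ (S.Q _ i.1.2) :=
        ENNReal.tsum_le_tsum fun i => ht _ i.1.2
    _ = θ * μ (⋃ i ∈ S.stoppingCubes j₀ h lam k α, S.Q _ i.2) := by
        rw [ENNReal.tsum_mul_left, measure_biUnion hcount pairwiseDisjoint_stoppingCubes
          fun i _ => S.measurableSet_Q _ i.2]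
    _ ≤ θ * μ (S.Q k α ∩ {x | lam < tailSum h k.toNat x}) := by
        gcongr
        exact iUnion_stoppingCubes_subset

theorem IsCubewise.measure_mul_lt_tailSum_le [BorelSpace M] (hh : S.IsCubewise j₀ h) {b : ℝ≥0∞}
    (hb : ∀ᵐ x ∂μ, ∀ j, h j x ≤ b)
    (hhalf : ∀ (k : ℤ) (α : S.I k),
      2 * μ (S.Q k α ∩ {x | lam < tailSum h k.toNat x}) ≤ μ (S.Q k α)) (m : ℕ) :
    ∀ (k : ℤ) (α : S.I k),
      μ (S.Q k α ∩ {x | m * (lam + j₀ * b) < tailSum h k.toNat x}) ≤ 2⁻¹ ^ m * μ (S.Q k α) := by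
  induction m with
  | zero =>
    intro k α
    simpa using measure_mono Set.inter_subset_left
  | succ m ih =>
    intro k α
    have hhalf' : μ (S.Q k α ∩ {x | lam < tailSum h k.toNat x}) ≤ 2⁻¹ * μ (S.Q k α) := by
      rw [mul_comm, ← div_eq_mul_inv, ENNReal.le_div_iff_mul_le (by simp) (by simp), mul_comm]
      exact hhalf k α
    calc μ (S.Q k α ∩ {x | (m + 1 : ℕ) * (lam + j₀ * b) < tailSum h k.toNat x})
        = μ (S.Q k α ∩ {x | lam + j₀ * b + m * (lam + j₀ * b) < tailSum h k.toNat x}) := by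
          rw [Nat.cast_succ, add_mul, one_mul, add_comm]
      _ ≤ 2⁻¹ ^ m * μ (S.Q k α ∩ {x | lam < tailSum h k.toNat x}) :=
          hh.measure_add_lt_tailSum_le hb ih
      _ ≤ 2⁻¹ ^ m * (2⁻¹ * μ (S.Q k α)) := by gcongr
      _ = 2⁻¹ ^ (m + 1) * μ (S.Q k α) := by rw [pow_succ, mul_assoc]

end Stopping

section Norms

variable {g : ℕ → M → ℝ≥0∞} {p q : ℝ≥0∞}

theorem lpOn_eq_eLpNorm (hp : p ≠ 0) (A : Set M) (f : M → ℝ≥0∞) :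
    lpOn μ p A f = eLpNorm f p (μ.restrict A) := by
  unfold lpOn
  split_ifs with hpt
  · rw [hpt, eLpNorm_exponent_top]
    rfl
  · rw [eLpNorm_eq_lintegral_rpow_enorm_toReal hp hpt]
    rfl

theorem fNorm_le_iff (hD : S.IsDoubling j₀ D) (hp : p ≠ 0) {N : ℝ≥0∞} :
    fNorm S p q (p⁻¹).toReal g ≤ N ↔ ∀ (k : ℤ) (α : S.I k),
      eLpNorm (tailLq q g k.toNat) p (μ.restrict (S.Q k α)) ≤
        N * μ (S.Q k α) ^ p.toReal⁻¹ := by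
  have hp_inv : 0 ≤ p.toReal⁻¹ := by positivity
  refine iSup_le_iff.trans (forall_congr' fun k => iSup_le_iff.trans (forall_congr' fun α => ?_))
  rw [lpOn_eq_eLpNorm hp, ENNReal.toReal_inv, ENNReal.rpow_neg, ENNReal.inv_mul_le_iff, mul_comm N]
  · rfl
  · simp [ENNReal.rpow_eq_zero_iff, (hD.measure_pos k α).ne', (hD.measure_lt_top k α).ne]
  · exact ENNReal.rpow_ne_top_of_nonneg hp_inv (hD.measure_lt_top k α).ne

theorem mul_measure_lt_tailLq_le_of_fNorm_le [BorelSpace M] (hD : S.IsDoubling j₀ D)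
    (hg : S.IsCubewise j₀ g) (hp : p ≠ 0) {N : ℝ≥0∞} (hN : fNorm S p q (p⁻¹).toReal g ≤ N)
    (A : ℝ≥0∞) (k : ℤ) (α : S.I k) :
    A * μ (S.Q k α ∩ {x | A ^ p.toReal⁻¹ * N < tailLq q g k.toNat x}) ≤ μ (S.Q k α) := by
  have hmeas := measurable_tailLq q hg.measurable k.toNat
  have hN' := (fNorm_le_iff hD hp).1 hN k α
  rw [← Measure.restrict_apply_univ (S.Q k α)] at hN'
  simpa only [Measure.restrict_apply_univ, Set.inter_comm,
    Measure.restrict_apply (measurableSet_lt measurable_const hmeas)] using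
    mul_measure_lt_le_of_eLpNorm_le hmeas hp hN' A

theorem fNorm_top_le_of_ae_le (hD : S.IsDoubling j₀ D) (hp : p ≠ 0)
    (hlam : ∀ᵐ x ∂μ, ∀ j, g j x ≤ lam) : fNorm S p ⊤ (p⁻¹).toReal g ≤ lam := by
  refine (fNorm_le_iff hD hp).2 fun k α => ?_
  have hbdd : ∀ᵐ x ∂μ.restrict (S.Q k α), ‖tailLq ⊤ g k.toNat x‖ₑ ≤ lam := by
    filter_upwards [ae_restrict_of_ae hlam] with x hx
    rw [enorm_eq_self, tailLq, seqLq, if_pos rfl]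
    refine iSup_le fun j => ?_
    split_ifs
    exacts [hx j, zero_le]
  refine (eLpNorm_le_of_ae_enorm_bound hbdd).trans_eq ?_
  rw [Measure.restrict_apply_univ, smul_eq_mul, mul_comm]

/-- The factor `C` in `fNorm S p q _ g ≤ C * lam`, for finite `p` and `q`, when the tails of `g`
exceed `lam` on at most half of every cube: the `(p/q)`-th moment bound, with step `1 + j₀`, for
`∑ g_j ^ q` in units of `lam ^ q`. -/
noncomputable def decayConst (j₀ : ℕ) (p q : ℝ) : ℝ≥0∞ :=
  (geomMoment (p / q) * (1 + j₀) ^ (p / q)) ^ p⁻¹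

theorem fNorm_le_decayConst_mul [BorelSpace M] (hD : S.IsDoubling j₀ D) (hg : S.IsCubewise j₀ g)
    (hp : p ≠ 0) (hpt : p ≠ ⊤) (hq : q ≠ 0) (hqt : q ≠ ⊤) (hlam : ∀ᵐ x ∂μ, ∀ j, g j x ≤ lam)
    (hhalf : ∀ (k : ℤ) (α : S.I k),
      2 * μ (S.Q k α ∩ {x | lam < tailLq q g k.toNat x}) ≤ μ (S.Q k α)) :
    fNorm S p q (p⁻¹).toReal g ≤ decayConst j₀ p.toReal q.toReal * lam := by
  have hp_pos := ENNReal.toReal_pos hp hpt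
  have hq_pos := ENNReal.toReal_pos hq hqt
  have hg' := hg.rpow q.toReal
  have hlam' : ∀ᵐ x ∂μ, ∀ j, g j x ^ q.toReal ≤ lam ^ q.toReal := by
    filter_upwards [hlam] with x hx j
    gcongr
    exact hx j
  simp only [lt_tailLq_iff hq hqt] at hhalf
  refine (fNorm_le_iff hD hp).2 fun k α => ?_
  have hmeas := measurable_tailSum hg'.measurable k.toNat
  have hdecay (m : ℕ) := hg'.measure_mul_lt_tailSum_le hlam' hhalf m k α
  have hmoment := lintegral_rpow_le_of_measure_mul_lt_le (ν := μ.restrict (S.Q k α)) hmeas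
    (div_pos hp_pos hq_pos) (hD.measure_lt_top k α).ne fun m => by
      rw [Measure.restrict_apply (measurableSet_lt measurable_const hmeas), Set.inter_comm]
      exact hdecay m
  calc eLpNorm (tailLq q g k.toNat) p (μ.restrict (S.Q k α))
      = (∫⁻ x in S.Q k α, tailSum (fun j x => g j x ^ q.toReal) k.toNat x ^
          (p.toReal / q.toReal) ∂μ) ^ p.toReal⁻¹ :=
        eLpNorm_tailLq hp hpt hq hqt g k.toNat
    _ ≤ (geomMoment (p.toReal / q.toReal) *
          (lam ^ q.toReal + j₀ * lam ^ q.toReal) ^ (p.toReal / q.toReal) *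
          μ (S.Q k α)) ^ p.toReal⁻¹ := by gcongr
    _ = (geomMoment (p.toReal / q.toReal) * (1 + j₀) ^ (p.toReal / q.toReal) *
          lam ^ p.toReal * μ (S.Q k α)) ^ p.toReal⁻¹ := by
        rw [← one_add_mul, ENNReal.mul_rpow_of_nonneg (1 + j₀) _ (by positivity),
          ← ENNReal.rpow_mul, mul_div_cancel₀ _ hq_pos.ne', ← mul_assoc]
    _ = decayConst j₀ p.toReal q.toReal * lam * μ (S.Q k α) ^ p.toReal⁻¹ := by
        have hp_inv : 0 ≤ p.toReal⁻¹ := by positivity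
        rw [ENNReal.mul_rpow_of_nonneg _ _ hp_inv, ENNReal.mul_rpow_of_nonneg _ _ hp_inv,
          ENNReal.rpow_rpow_inv hp_pos.ne', decayConst]

theorem decayConst_ne_top (j₀ : ℕ) {p q : ℝ} (hp : 0 ≤ p) (hq : 0 ≤ q) : decayConst j₀ p q ≠ ⊤ := by
  refine ENNReal.rpow_ne_top_of_nonneg (by positivity) (ENNReal.mul_ne_top (geomMoment_ne_top _) ?_)
  exact ENNReal.rpow_ne_top_of_nonneg (by positivity) (by finiteness)

theorem exists_fNorm_le_mul_fNorm [BorelSpace M] (hD : S.IsDoubling j₀ D) {p₁ p₂ : ℝ≥0∞}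
    (hp₁ : p₁ ≠ 0) (hp₂ : p₂ ≠ 0) (hq : q ≠ 0) (hpq : p₁ = ⊤ → q = ⊤) :
    ∃ C : ℝ≥0, ∀ g, S.IsCubewise j₀ g →
      fNorm S p₁ q (p₁⁻¹).toReal g ≤ C * fNorm S p₂ q (p₂⁻¹).toReal g := by
  have hfin : (D + 2 : ℝ≥0∞) ^ p₂.toReal⁻¹ ≠ ⊤ :=
    ENNReal.rpow_ne_top_of_nonneg (by positivity) (by finiteness)
  have hweak {g : ℕ → M → ℝ≥0∞} (hg : S.IsCubewise j₀ g) :=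
    mul_measure_lt_tailLq_le_of_fNorm_le (q := q) hD hg hp₂ le_rfl (D + 2)
  have hlevel {g : ℕ → M → ℝ≥0∞} (hg : S.IsCubewise j₀ g) :=
    hg.ae_le_of_mul_measure_le hD hq (hweak hg)
  lift (D + 2 : ℝ≥0∞) ^ p₂.toReal⁻¹ to ℝ≥0 using hfin with C
  rcases eq_or_ne q ⊤ with rfl | hqt
  · exact ⟨C, fun g hg => fNorm_top_le_of_ae_le hD hp₁ (hlevel hg)⟩
  · refine ⟨(decayConst j₀ p₁.toReal q.toReal).toNNReal * C, fun g hg => ?_⟩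
    rw [ENNReal.coe_mul, mul_assoc,
      ENNReal.coe_toNNReal (decayConst_ne_top j₀ ENNReal.toReal_nonneg ENNReal.toReal_nonneg)]
    refine fNorm_le_decayConst_mul hD hg hp₁ (mt hpq hqt) hq hqt (hlevel hg) fun k α => ?_
    exact (mul_le_mul_left le_add_self _).trans (hweak hg k α)

end Norms

end ChristSystem

theorem stmt_18_general [BorelSpace M] {A : ℝ≥0}
    (hball : ∀ (x : M) (r : ℝ), 0 < r → 0 < μ (ball x r) ∧ μ (ball x r) < ⊤)
    (hdoub : ∀ (x : M) (r : ℝ), 0 < r → μ (ball x (2 * r)) ≤ A * μ (ball x r))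
    (S : ChristSystem M μ) (j₀ : ℕ) {p₁ p₂ q : ℝ≥0∞} (hp₁ : p₁ ≠ 0) (hp₂ : p₂ ≠ 0) (hq : q ≠ 0)
    (hp₁q : p₁ = ⊤ → q = ⊤) (hp₂q : p₂ = ⊤ → q = ⊤) :
    ∃ C : ℝ, 1 ≤ C ∧ ∀ g : ℕ → M → ℝ≥0∞, S.IsCubewise j₀ g →
      fNorm S p₁ q (p₁⁻¹).toReal g ≤ ENNReal.ofReal C * fNorm S p₂ q (p₂⁻¹).toReal g ∧
      fNorm S p₂ q (p₂⁻¹).toReal g ≤ ENNReal.ofReal C * fNorm S p₁ q (p₁⁻¹).toReal g := by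
  obtain ⟨D, hD⟩ := S.exists_isDoubling hball hdoub j₀
  obtain ⟨C₁, hC₁⟩ := ChristSystem.exists_fNorm_le_mul_fNorm hD hp₁ hp₂ hq hp₁q
  obtain ⟨C₂, hC₂⟩ := ChristSystem.exists_fNorm_le_mul_fNorm hD hp₂ hp₁ hq hp₂q
  refine ⟨(1 + C₁ + C₂ : ℝ≥0), ?_, fun g hg => ⟨(hC₁ g hg).trans ?_, (hC₂ g hg).trans ?_⟩⟩
  · exact_mod_cast le_self_add.trans le_self_add
  · rw [ENNReal.ofReal_coe_nnreal]
    gcongr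
    exact le_add_self.trans le_self_add
  · rw [ENNReal.ofReal_coe_nnreal]
    gcongr
    exact le_add_self

end

theorem stmt_18 {M : Type*} [MetricSpace M] [MeasurableSpace M] [BorelSpace M]
    (μ : Measure M)
    (hball : ∀ (x : M) (r : ℝ), 0 < r → 0 < μ (ball x r) ∧ μ (ball x r) < ⊤)
    (K d : ℝ) (hK : 1 < K) (hd : d = Real.logb 2 K)
    (hdoub : ∀ (x : M) (r lam : ℝ), 0 < r → 1 ≤ lam →
      μ (ball x (lam * r)) ≤ ENNReal.ofReal (K * lam ^ d) * μ (ball x r))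
    (S : ChristSystem M μ) (j₀ : ℕ)
    (hfin : ∀ (j : ℕ) (t : S.I j), Finite (SubIdx S j₀ j t))
    (s : ℝ) (p q : ℝ≥0∞) (hp0 : 0 < p) (hpt : p ≠ ⊤) (hq : 0 < q) :
    ∃ C : ℝ, 1 ≤ C ∧
      ∀ a : (j : ℕ) → (t : S.I j) → SubIdx S j₀ j t → ℂ,
        (fNorm S q q (q⁻¹).toReal (seqFun S j₀ (deltaWeight S j₀ s) a) ≤
            ENNReal.ofReal C * fNorm S p q (p⁻¹).toReal (seqFun S j₀ (deltaWeight S j₀ s) a)) ∧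
        (fNorm S p q (p⁻¹).toReal (seqFun S j₀ (deltaWeight S j₀ s) a) ≤
            ENNReal.ofReal C * fNorm S q q (q⁻¹).toReal (seqFun S j₀ (deltaWeight S j₀ s) a)) ∧
        (fNorm S q q (q⁻¹).toReal (seqFun S j₀ (tildeWeight S j₀ d s) a) ≤
            ENNReal.ofReal C * fNorm S p q (p⁻¹).toReal (seqFun S j₀ (tildeWeight S j₀ d s) a)) ∧
        (fNorm S p q (p⁻¹).toReal (seqFun S j₀ (tildeWeight S j₀ d s) a) ≤
            ENNReal.ofReal C * fNorm S q q (q⁻¹).toReal (seqFun S j₀ (tildeWeight S j₀ d s) a)) := by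
  obtain ⟨C, hC1, hC⟩ := stmt_18_general (A := (K * 2 ^ d).toNNReal) hball
    (fun x r hr => hdoub x r 2 hr one_le_two) S j₀ hq.ne' hp0.ne' hq.ne' id (absurd · hpt)
  have equiv_seqFun w a := hC _ (S.isCubewise_seqFun j₀ w a)
  exact ⟨C, hC1, fun a => ⟨(equiv_seqFun _ a).1, (equiv_seqFun _ a).2,
    (equiv_seqFun _ a).1, (equiv_seqFun _ a).2⟩⟩
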